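/- arXiv:1810.01315 — 2 statements merged into one kernel-verified Lean document; each statement's English description precedes it below -/
import Mathlib

section
/- Let 𝒢_𝔸 denote the group of all homeomorphisms of the Alexandroff square 𝔸 acting on 𝔸 by evaluation. The set of orbits {𝒢_𝔸·x : x ∈ 𝔸} equals the six-element family { {P₁,P₃}, {P₂,P₄}, L₁ ∪ L₃, L₂ ∪ L₄, Δ \ {P₁,P₃}, ((0,1)×(0,1)) \ Δ }. -/
open Set

/-- The unit interval `[0,1]` with its Euclidean (subspace) topology. -/
local notation "𝕀" => unitInterval

/-- The generating family for the Alexandroff square topology on `[0,1] × [0,1]`: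
sets `{x} × U` with `U` open in `𝕀` and `x ∉ U`, together with sets
`([0,1] × U) \ (F × [0,1])` with `U` open in `𝕀` and `F` finite. -/
def alexBasis : Set (Set (𝕀 × 𝕀)) :=
  {S | (∃ (x : 𝕀) (U : Set 𝕀), IsOpen U ∧ x ∉ U ∧ S = ({x} : Set 𝕀) ×ˢ U) ∨
       (∃ (U F : Set 𝕀), IsOpen U ∧ F.Finite ∧ S = ((univ : Set 𝕀) ×ˢ U) \ (F ×ˢ (univ : Set 𝕀)))}

/-- The Alexandroff square topology. -/
def alexTop : TopologicalSpace (𝕀 × 𝕀) := TopologicalSpace.generateFrom alexBasis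

def P₁ : 𝕀 × 𝕀 := (0, 0)
def P₂ : 𝕀 × 𝕀 := (0, 1)
def P₃ : 𝕀 × 𝕀 := (1, 1)
def P₄ : 𝕀 × 𝕀 := (1, 0)
def L₁ : Set (𝕀 × 𝕀) := ({0} : Set 𝕀) ×ˢ Ioo (0 : 𝕀) 1
def L₂ : Set (𝕀 × 𝕀) := (Ioo (0 : 𝕀) 1) ×ˢ ({1} : Set 𝕀)
def L₃ : Set (𝕀 × 𝕀) := ({1} : Set 𝕀) ×ˢ Ioo (0 : 𝕀) 1
def L₄ : Set (𝕀 × 𝕀) := (Ioo (0 : 𝕀) 1) ×ˢ ({0} : Set 𝕀)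
def diag : Set (𝕀 × 𝕀) := {p : 𝕀 × 𝕀 | p.1 = p.2}

/-- The orbit of a point of the Alexandroff square under the full group of
self-homeomorphisms. -/
def alexOrbit (x : 𝕀 × 𝕀) : Set (𝕀 × 𝕀) :=
  {y | ∃ g : @Homeomorph (𝕀 × 𝕀) (𝕀 × 𝕀) alexTop alexTop, g x = y}

/-!
Points off the diagonal have countable neighbourhood bases inside their columns, whereas every
neighbourhood of `(x, x)` contains `(y, x)` for all but finitely many `y`. For an uncountable base
space, homeomorphisms of Alexandroff squares therefore preserve the diagonal. Moreover, a connected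
set containing a point `p` but not the diagonal point of the column of `p` stays in that column;
since a column is connected and meets the diagonal once, homeomorphisms map columns to columns.
Reading off second coordinates along the column over `x` gives a homeomorphism `h` of the base
spaces with `g (x, y) = (h x, h y)`, so the orbits of the Alexandroff square are those of the
diagonal action of the homeomorphism group of the base.

Over `[0, 1]`, homeomorphisms preserve `{0, 1}`, being monotone or antitone. There is no further
constraint on the images of two points: after identifying `[0, 1]` with `[0, ∞]`, the maps
`t ↦ c * t ^ s` send any `0 < u < v < ∞` to any `0 < u' < v' < ∞`, and `t ↦ 1 - t` reverses the
order.
-/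

/-- The Alexandroff square over a space `X`, as a type synonym of `X × X` to keep the product
topology out of the way; `AlexandroffSquare unitInterval` carries `alexTop`, definitionally. -/
def AlexandroffSquare (X : Type*) : Type _ := X × X

namespace AlexandroffSquare

open Filter TopologicalSpace Topology

section Basic

variable {X Y Z : Type*}

/-- The point of the Alexandroff square with the given coordinates. Fixing the first coordinate
parametrises a column. -/
def mk (x y : X) : AlexandroffSquare X := (x, y)

/-- The first coordinate; its fibres are the columns. It is not continuous. -/
def fst (p : AlexandroffSquare X) : X := Prod.fst p

/-- The second coordinate, which is continuous. -/
def snd (p : AlexandroffSquare X) : X := Prod.snd p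

@[simp] lemma fst_mk (x y : X) : (mk x y).fst = x := rfl

@[simp] lemma snd_mk (x y : X) : (mk x y).snd = y := rfl

@[simp] lemma mk_fst_snd (p : AlexandroffSquare X) : mk p.fst p.snd = p := rfl

lemma mk_fst_fst_of_eq {p : AlexandroffSquare X} (hp : p.fst = p.snd) : mk p.fst p.fst = p :=
  Prod.ext rfl hp

variable [TopologicalSpace X] [TopologicalSpace Y] [TopologicalSpace Z]

/-- The generating family of the Alexandroff square topology; for `X = unitInterval` it is
`alexBasis`. -/
def generators (X : Type*) [TopologicalSpace X] : Set (Set (AlexandroffSquare X)) :=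
  {S | (∃ (x : X) (U : Set X), IsOpen U ∧ x ∉ U ∧ S = ({x} : Set X) ×ˢ U) ∨
       (∃ (U F : Set X), IsOpen U ∧ F.Finite ∧ S = ((univ : Set X) ×ˢ U) \ (F ×ˢ (univ : Set X)))}

instance : TopologicalSpace (AlexandroffSquare X) := generateFrom (generators X)

lemma isOpen_setOf_snd_mem_and_fst_notMem {U F : Set X} (hU : IsOpen U) (hF : F.Finite) :
    IsOpen {p : AlexandroffSquare X | p.snd ∈ U ∧ p.fst ∉ F} := by
  refine isOpen_generateFrom_of_mem (Or.inr ⟨U, F, hU, hF, ?_⟩)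
  ext p
  exact ⟨fun h ↦ ⟨⟨trivial, h.1⟩, fun hp ↦ h.2 hp.1⟩, fun h ↦ ⟨h.1.2, fun hp ↦ h.2 ⟨hp, trivial⟩⟩⟩

lemma continuous_snd : Continuous (snd : AlexandroffSquare X → X) where
  isOpen_preimage U hU := by
    convert isOpen_setOf_snd_mem_and_fst_notMem hU finite_empty using 1
    ext p
    simp

lemma isClosed_column (x : X) : IsClosed {p : AlexandroffSquare X | p.fst = x} where
  isOpen_compl := by
    convert isOpen_setOf_snd_mem_and_fst_notMem isOpen_univ (finite_singleton x) using 1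
    ext p
    simp

lemma isOpen_puncturedColumn [T1Space X] (x : X) :
    IsOpen {p : AlexandroffSquare X | p.fst = x ∧ p.snd ≠ x} :=
  isOpen_generateFrom_of_mem (Or.inl ⟨x, {x}ᶜ, isOpen_compl_singleton, by simp, rfl⟩)

lemma continuous_of_column {f : Z → AlexandroffSquare X} (hsnd : Continuous fun z ↦ (f z).snd)
    (hcol : ∀ x, IsClosed {z | (f z).fst = x})
    (hpunct : ∀ x, IsOpen {z | (f z).fst = x ∧ (f z).snd ≠ x}) : Continuous f := by
  refine continuous_generateFrom_iff.2 ?_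
  rintro _ (⟨x, U, hU, hx, rfl⟩ | ⟨U, F, hU, hF, rfl⟩)
  · convert (hpunct x).inter (hU.preimage hsnd) using 1
    ext z
    exact ⟨fun h ↦ ⟨⟨h.1, fun hz ↦ hx (hz ▸ h.2)⟩, h.2⟩, fun h ↦ ⟨h.1.1, h.2⟩⟩
  · have hF' : (fun z ↦ (f z).fst) ⁻¹' F = ⋃ x ∈ F, {z | (f z).fst = x} := by ext z; simp
    convert (hU.preimage hsnd).sdiff (hF.isClosed_biUnion fun x _ ↦ hcol x) using 1
    rw [← hF']
    ext z
    exact ⟨fun h ↦ ⟨h.1.2, fun hz ↦ h.2 ⟨hz, trivial⟩⟩, fun h ↦ ⟨⟨trivial, h.1⟩, fun hz ↦ h.2 hz.1⟩⟩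

lemma continuous_mk [T1Space X] (x : X) : Continuous (mk x) :=
  continuous_of_column continuous_id (fun x' ↦ isClosed_const (p := x = x'))
    fun x' ↦ (isOpen_const (p := x = x')).inter (isOpen_ne (x := x'))

lemma continuous_map [T1Space X] (h : X ≃ₜ Y) :
    Continuous fun p : AlexandroffSquare X ↦ mk (h p.fst) (h p.snd) := by
  refine continuous_of_column (h.continuous.comp continuous_snd) (fun y ↦ ?_) fun y ↦ ?_
  · simpa only [fst_mk, h.eq_symm_apply] using isClosed_column (h.symm y)
  · simpa only [fst_mk, snd_mk, h.eq_symm_apply, ne_eq] using isOpen_puncturedColumn (h.symm y)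

/-- The diagonal action of a homeomorphism on Alexandroff squares. -/
def mapHomeomorph [T1Space X] [T1Space Y] (h : X ≃ₜ Y) :
    AlexandroffSquare X ≃ₜ AlexandroffSquare Y where
  toFun p := mk (h p.fst) (h p.snd)
  invFun q := mk (h.symm q.fst) (h.symm q.snd)
  left_inv p := by simp
  right_inv q := by simp
  continuous_toFun := continuous_map h
  continuous_invFun := continuous_map h.symm

end Basic

section Neighborhoods

variable {X : Type*} [TopologicalSpace X]

lemma tendsto_mk_cofinite (x : X) : Tendsto (mk · x) cofinite (𝓝 (mk x x)) := by
  refine tendsto_nhds_generateFrom_iff.2 ?_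
  rintro _ (⟨y, U, -, hy, rfl⟩ | ⟨U, F, -, hF, rfl⟩) hx
  · obtain ⟨rfl, hU⟩ : x = y ∧ x ∈ U := hx
    exact absurd hU hy
  · filter_upwards [hF.compl_mem_cofinite] with y hy
    exact ⟨hx.1, fun h ↦ hy h.1⟩

lemma not_isCountablyGenerated_nhds_mk_self [Uncountable X] (x : X) :
    ¬ (𝓝 (mk x x)).IsCountablyGenerated := by
  intro _
  have hsub : ({x}ᶜ : Set X) ⊆ ((mk · x) ⁻¹' (𝓝 (mk x x)).ker)ᶜ := fun y hy hker ↦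
    mem_ker.1 hker _ ((isClosed_column y).isOpen_compl.mem_nhds (Ne.symm hy)) rfl
  have hcount := ((tendsto_mk_cofinite x).countable_compl_preimage_ker.mono hsub).union
    (countable_singleton x)
  rw [compl_union_self] at hcount
  exact not_countable_univ hcount

lemma nhds_mk_of_ne [T1Space X] {x y : X} (h : x ≠ y) : 𝓝 (mk x y) = map (mk x) (𝓝 y) := by
  refine le_antisymm (fun S hS ↦ ?_) (continuous_mk x).continuousAt
  have hcol : {p : AlexandroffSquare X | p.fst = x ∧ p.snd ≠ x} ∈ 𝓝 (mk x y) :=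
    (isOpen_puncturedColumn x).mem_nhds ⟨rfl, h.symm⟩
  filter_upwards [hcol, continuous_snd.continuousAt.preimage_mem_nhds hS] with p hp hpS
  rw [← mk_fst_snd p, hp.1]
  exact hpS

lemma isCountablyGenerated_nhds_iff [T1Space X] [FirstCountableTopology X] [Uncountable X]
    {p : AlexandroffSquare X} : (𝓝 p).IsCountablyGenerated ↔ p.fst ≠ p.snd := by
  refine ⟨fun hp h ↦ ?_, fun h ↦ ?_⟩
  · rw [← mk_fst_fst_of_eq h] at hp
    exact not_isCountablyGenerated_nhds_mk_self _ hp
  · rw [← mk_fst_snd p, nhds_mk_of_ne h]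
    infer_instance

lemma subset_column_of_isPreconnected [T1Space X] {S : Set (AlexandroffSquare X)}
    (hS : IsPreconnected S) {p : AlexandroffSquare X} (hp : p ∈ S) (hdiag : mk p.fst p.fst ∉ S) :
    S ⊆ {q | q.fst = p.fst} := by
  have hne : ∀ q ∈ S, q.fst = p.fst → q.snd ≠ p.fst := fun q hq h₁ h₂ ↦
    hdiag ((Prod.ext h₁ h₂ : q = mk p.fst p.fst) ▸ hq)
  refine (hS.subset_left_of_subset_union (isOpen_puncturedColumn p.fst)
    (isClosed_column p.fst).isOpen_compl ?_ ?_ ?_).trans fun q hq ↦ hq.1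
  · exact disjoint_left.2 fun q hq hq' ↦ hq' hq.1
  · exact fun q hq ↦ (em (q.fst = p.fst)).imp (fun h ↦ ⟨h, hne q hq h⟩) id
  · exact ⟨p, hp, rfl, hne p hp rfl⟩

end Neighborhoods

section Homeomorphisms

variable {X Y : Type*} [TopologicalSpace X] [TopologicalSpace Y]
  [T1Space X] [T1Space Y] [FirstCountableTopology X] [FirstCountableTopology Y]
  [Uncountable X] [Uncountable Y]

lemma fst_apply_eq_snd_apply_iff (g : AlexandroffSquare X ≃ₜ AlexandroffSquare Y)
    {p : AlexandroffSquare X} : (g p).fst = (g p).snd ↔ p.fst = p.snd := by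
  rw [← not_iff_not, ← ne_eq, ← ne_eq, ← isCountablyGenerated_nhds_iff,
    ← isCountablyGenerated_nhds_iff]
  refine ⟨fun _ ↦ ?_, fun _ ↦ ?_⟩
  · rw [g.isInducing.nhds_eq_comap]
    infer_instance
  · rw [← g.map_nhds_eq]
    infer_instance

lemma mk_fst_apply_mk_self (g : AlexandroffSquare X ≃ₜ AlexandroffSquare Y) (x : X) :
    mk (g (mk x x)).fst (g (mk x x)).fst = g (mk x x) :=
  mk_fst_fst_of_eq ((fst_apply_eq_snd_apply_iff g).2 rfl)

lemma fst_apply_mk [PreconnectedSpace X] (g : AlexandroffSquare X ≃ₜ AlexandroffSquare Y)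
    (x y : X) : (g (mk x y)).fst = (g (mk x x)).fst := by
  have hconn : IsPreconnected (range fun t ↦ g (mk x t)) :=
    isPreconnected_range (g.continuous.comp (continuous_mk x))
  by_cases hdiag : mk (g (mk x y)).fst (g (mk x y)).fst ∈ range fun t ↦ g (mk x t)
  · obtain ⟨t, ht : g (mk x t) = _⟩ := hdiag
    obtain rfl : x = t :=
      (fst_apply_eq_snd_apply_iff (p := mk x t) g).1 (by rw [ht, fst_mk, snd_mk])
    rw [ht, fst_mk]
  · exact (subset_column_of_isPreconnected hconn ⟨y, rfl⟩ hdiag ⟨x, rfl⟩).symm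

variable [PreconnectedSpace X] [PreconnectedSpace Y]

/-- The homeomorphism of the base spaces induced by the restriction of a homeomorphism of
Alexandroff squares to the column over `x`, the columns being parametrised by `mk`. -/
def columnHomeomorph (g : AlexandroffSquare X ≃ₜ AlexandroffSquare Y) (x : X) : X ≃ₜ Y where
  toFun y := (g (mk x y)).snd
  invFun z := (g.symm (mk (g (mk x x)).fst z)).snd
  left_inv y := by
    change (g.symm (mk (g (mk x x)).fst (g (mk x y)).snd)).snd = y
    rw [← fst_apply_mk g x y, mk_fst_snd, g.symm_apply_apply, snd_mk]
  right_inv z := by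
    have hcol : (g.symm (mk (g (mk x x)).fst z)).fst = x := by
      rw [fst_apply_mk, mk_fst_apply_mk_self, g.symm_apply_apply, fst_mk]
    have hpt : mk x (g.symm (mk (g (mk x x)).fst z)).snd = g.symm (mk (g (mk x x)).fst z) :=
      Prod.ext hcol.symm rfl
    change (g (mk x (g.symm (mk (g (mk x x)).fst z)).snd)).snd = z
    rw [hpt, g.apply_symm_apply, snd_mk]
  continuous_toFun := continuous_snd.comp (g.continuous.comp (continuous_mk x))
  continuous_invFun := continuous_snd.comp (g.symm.continuous.comp (continuous_mk _))

lemma apply_eq_mk_columnHomeomorph (g : AlexandroffSquare X ≃ₜ AlexandroffSquare Y)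
    (p : AlexandroffSquare X) :
    g p = mk (columnHomeomorph g p.fst p.fst) (columnHomeomorph g p.fst p.snd) :=
  Prod.ext ((fst_apply_mk g p.fst p.snd).trans ((fst_apply_eq_snd_apply_iff g).2 rfl)) rfl

theorem exists_homeomorph_apply_eq_iff {p : AlexandroffSquare X} {q : AlexandroffSquare Y} :
    (∃ g : AlexandroffSquare X ≃ₜ AlexandroffSquare Y, g p = q) ↔
      ∃ h : X ≃ₜ Y, h p.fst = q.fst ∧ h p.snd = q.snd := by
  refine ⟨?_, fun ⟨h, h₁, h₂⟩ ↦ ⟨mapHomeomorph h, Prod.ext h₁ h₂⟩⟩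
  rintro ⟨g, rfl⟩
  have hg := apply_eq_mk_columnHomeomorph g p
  exact ⟨columnHomeomorph g p.fst, (congrArg fst hg).symm, (congrArg snd hg).symm⟩

end Homeomorphisms

end AlexandroffSquare

section UnitInterval

open scoped ENNReal NNReal

lemma exists_ennreal_rpow_eq {w w' : ℝ≥0∞} (hw : 1 < w) (hwt : w ≠ ⊤) (hw' : 1 < w')
    (hwt' : w' ≠ ⊤) : ∃ s : ℝ, 0 < s ∧ w ^ s = w' := by
  lift w to ℝ≥0 using hwt
  lift w' to ℝ≥0 using hwt'
  rw [ENNReal.one_lt_coe_iff] at hw hw'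
  have hpos : 0 < w := zero_lt_one.trans hw
  have hlog : w ^ Real.logb w w' = w' :=
    NNReal.eq (Real.rpow_logb hpos (NNReal.coe_ne_one.2 hw.ne') (zero_lt_one.trans hw'))
  exact ⟨_, Real.logb_pos hw hw',
    (ENNReal.coe_rpow_of_ne_zero hpos.ne' _).symm.trans (congrArg _ hlog)⟩

lemma exists_ennreal_orderIso_apply_eq {a a' : ℝ≥0∞} (hbot : a = ⊥ ↔ a' = ⊥)
    (htop : a = ⊤ ↔ a' = ⊤) : ∃ f : ℝ≥0∞ ≃o ℝ≥0∞, f a = a' := by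
  by_cases ha : a = ⊥
  · exact ⟨.refl _, ha.trans (hbot.1 ha).symm⟩
  by_cases hat : a = ⊤
  · exact ⟨.refl _, hat.trans (htop.1 hat).symm⟩
  have hunit : IsUnit (a' / a) := ENNReal.isUnit_iff.2
    ⟨ENNReal.div_ne_zero.2 ⟨mt hbot.2 ha, hat⟩, ENNReal.div_ne_top (mt htop.2 hat) ha⟩
  exact ⟨ENNReal.mulLeftOrderIso _ hunit, ENNReal.div_mul_cancel ha hat⟩

lemma exists_ennreal_orderIso_apply_eq_apply_eq_of_lt {a b a' b' : ℝ≥0∞} (hab : a < b)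
    (hab' : a' < b') (hbot : a = ⊥ ↔ a' = ⊥) (htop : b = ⊤ ↔ b' = ⊤) :
    ∃ f : ℝ≥0∞ ≃o ℝ≥0∞, f a = a' ∧ f b = b' := by
  by_cases ha : a = ⊥
  · obtain ⟨f, hf⟩ := exists_ennreal_orderIso_apply_eq (a := b) (a' := b')
      (by simp only [hab.ne_bot, hab'.ne_bot]) htop
    exact ⟨f, by rw [ha, hbot.1 ha, f.map_bot], hf⟩
  by_cases hb : b = ⊤
  · obtain ⟨f, hf⟩ := exists_ennreal_orderIso_apply_eq hbot
      (by simp only [hab.ne_top, hab'.ne_top])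
    exact ⟨f, hf, by rw [hb, htop.1 hb, f.map_top]⟩
  have normalize {u : ℝ≥0∞} (hu : u ≠ ⊥) (hut : u ≠ ⊤) : ∃ f : ℝ≥0∞ ≃o ℝ≥0∞, f u = 1 :=
    exists_ennreal_orderIso_apply_eq (by simpa using hu) (by simpa using hut)
  obtain ⟨f, hf⟩ := normalize ha hab.ne_top
  obtain ⟨f', hf'⟩ := normalize (mt hbot.2 ha) hab'.ne_top
  obtain ⟨s, hs, hpow⟩ := exists_ennreal_rpow_eq
    (hf ▸ f.strictMono hab) ((map_eq_top_iff f).not.2 hb)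
    (hf' ▸ f'.strictMono hab') ((map_eq_top_iff f').not.2 (mt htop.2 hb))
  refine ⟨(f.trans (ENNReal.orderIsoRpow s hs)).trans f'.symm, ?_, ?_⟩
  · simp [hf, f'.symm_apply_eq, hf']
  · simp [hpow]

lemma exists_unitInterval_orderIso_apply_eq_apply_eq {a b a' b' : 𝕀} (hab : a ≤ b)
    (hab' : a' ≤ b') (heq : a = b ↔ a' = b') (hbot : a = 0 ↔ a' = 0) (htop : b = 1 ↔ b' = 1) :
    ∃ f : 𝕀 ≃o 𝕀, f a = a' ∧ f b = b' := by
  let e : 𝕀 ≃o ℝ≥0∞ := ENNReal.orderIsoUnitIntervalBirational.symm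
  have hbot' : e a = ⊥ ↔ e a' = ⊥ :=
    (map_eq_bot_iff e).trans (hbot.trans (map_eq_bot_iff e).symm)
  have htop' : e b = ⊤ ↔ e b' = ⊤ :=
    (map_eq_top_iff e).trans (htop.trans (map_eq_top_iff e).symm)
  obtain ⟨f, hfa, hfb⟩ : ∃ f : ℝ≥0∞ ≃o ℝ≥0∞, f (e a) = e a' ∧ f (e b) = e b' := by
    rcases hab.eq_or_lt with rfl | hlt
    · obtain rfl := heq.1 rfl
      simpa using exists_ennreal_orderIso_apply_eq hbot' htop'
    · exact exists_ennreal_orderIso_apply_eq_apply_eq_of_lt (e.strictMono hlt)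
        (e.strictMono (hab'.lt_of_ne (heq.not.1 hlt.ne))) hbot' htop'
  exact ⟨(e.trans f).trans e.symm, by simp [hfa], by simp [hfb]⟩

lemma image_homeomorph_bot_top {X Y : Type*} [ConditionallyCompleteLinearOrder X]
    [TopologicalSpace X] [OrderTopology X] [DenselyOrdered X] [BoundedOrder X] [LinearOrder Y]
    [TopologicalSpace Y] [OrderClosedTopology Y] [BoundedOrder Y] (h : X ≃ₜ Y) :
    h '' {⊥, ⊤} = {⊥, ⊤} := by
  rw [image_pair]
  rcases h.continuous.strictMono_of_inj h.injective with hm | hm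
  · have hbot : h ⊥ = ⊥ := le_bot_iff.1 ((hm.monotone bot_le).trans_eq (h.apply_symm_apply ⊥))
    have htop : h ⊤ = ⊤ :=
      top_le_iff.1 ((h.apply_symm_apply ⊤).symm.trans_le (hm.monotone le_top))
    rw [hbot, htop]
  · have hbot : h ⊥ = ⊤ := top_le_iff.1 ((h.apply_symm_apply ⊤).symm.trans_le (hm.antitone bot_le))
    have htop : h ⊤ = ⊥ := le_bot_iff.1 ((hm.antitone le_top).trans_eq (h.apply_symm_apply ⊥))
    rw [hbot, htop, pair_comm]

lemma homeomorph_apply_mem_zero_one_iff (h : 𝕀 ≃ₜ 𝕀) {x : 𝕀} :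
    h x ∈ ({0, 1} : Set 𝕀) ↔ x ∈ ({0, 1} : Set 𝕀) := by
  conv_lhs => rw [← show h '' {0, 1} = {0, 1} from image_homeomorph_bot_top h]
  exact h.injective.mem_set_image

lemma exists_homeomorph_apply_eq_apply_eq_of_le {x y x' y' : 𝕀} (hxy : x ≤ y)
    (heq : x = y ↔ x' = y') (hx : x ∈ ({0, 1} : Set 𝕀) ↔ x' ∈ ({0, 1} : Set 𝕀))
    (hy : y ∈ ({0, 1} : Set 𝕀) ↔ y' ∈ ({0, 1} : Set 𝕀)) :
    ∃ h : 𝕀 ≃ₜ 𝕀, h x = x' ∧ h y = y' := by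
  simp only [mem_insert_iff, mem_singleton_iff] at hx hy
  -- An increasing homeomorphism fixes both end points, a decreasing one exchanges them.
  have hcases : (x' ≤ y' ∧ (x = 0 ↔ x' = 0) ∧ (y = 1 ↔ y' = 1)) ∨
      (y' ≤ x' ∧ (x = 0 ↔ x' = 1) ∧ (y = 1 ↔ y' = 0)) := by
    have bounds (t : 𝕀) : 0 ≤ t ∧ t ≤ 1 := ⟨unitInterval.nonneg', unitInterval.le_one'⟩
    grind [bounds x, bounds y, bounds x', bounds y', zero_ne_one (α := 𝕀)]
  rcases hcases with ⟨hle, hbot, htop⟩ | ⟨hle, hbot, htop⟩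
  · obtain ⟨f, hfx, hfy⟩ := exists_unitInterval_orderIso_apply_eq_apply_eq hxy hle heq hbot htop
    exact ⟨f.toHomeomorph, hfx, hfy⟩
  · obtain ⟨f, hfx, hfy⟩ := exists_unitInterval_orderIso_apply_eq_apply_eq
      (a' := unitInterval.symm x') (b' := unitInterval.symm y') hxy (by simpa) (by simpa)
      (by simpa) (by simpa)
    exact ⟨f.toHomeomorph.trans unitInterval.symmHomeomorph, by simp [hfx], by simp [hfy]⟩

theorem exists_unitInterval_homeomorph_apply_eq_apply_eq_iff {x y x' y' : 𝕀} :
    (∃ h : 𝕀 ≃ₜ 𝕀, h x = x' ∧ h y = y') ↔ (x' = y' ↔ x = y) ∧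
      (x' ∈ ({0, 1} : Set 𝕀) ↔ x ∈ ({0, 1} : Set 𝕀)) ∧
      (y' ∈ ({0, 1} : Set 𝕀) ↔ y ∈ ({0, 1} : Set 𝕀)) := by
  refine ⟨?_, fun ⟨heq, hx, hy⟩ ↦ ?_⟩
  · rintro ⟨h, rfl, rfl⟩
    exact ⟨h.injective.eq_iff, homeomorph_apply_mem_zero_one_iff h,
      homeomorph_apply_mem_zero_one_iff h⟩
  · rcases le_total x y with hxy | hyx
    · exact exists_homeomorph_apply_eq_apply_eq_of_le hxy heq.symm hx.symm hy.symm
    · obtain ⟨h, h₁, h₂⟩ := exists_homeomorph_apply_eq_apply_eq_of_le hyx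
        (by rw [eq_comm, ← heq, eq_comm]) hy.symm hx.symm
      exact ⟨h, h₂, h₁⟩

instance : Uncountable 𝕀 := by
  rw [← Cardinal.aleph0_lt_mk_iff, Cardinal.mk_Icc_real zero_lt_one]
  exact Cardinal.aleph0_lt_continuum

end UnitInterval

section Orbits

/-- The set of points of the unit square for which the truth values of "on the diagonal", "on a
vertical edge" and "on a horizontal edge" are `d`, `v` and `h`. -/
def stratum (d v h : Prop) : Set (𝕀 × 𝕀) :=
  {q | (q.1 = q.2 ↔ d) ∧ (q.1 ∈ ({0, 1} : Set 𝕀) ↔ v) ∧ (q.2 ∈ ({0, 1} : Set 𝕀) ↔ h)}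

lemma mem_stratum_iff {d v h : Prop} {x y : 𝕀} : (x, y) ∈ stratum d v h ↔
    (x = y ↔ d) ∧ (x = 0 ∨ x = 1 ↔ v) ∧ (y = 0 ∨ y = 1 ↔ h) := Iff.rfl

lemma alexOrbit_eq_stratum (p : 𝕀 × 𝕀) :
    alexOrbit p = stratum (p.1 = p.2) (p.1 ∈ ({0, 1} : Set 𝕀)) (p.2 ∈ ({0, 1} : Set 𝕀)) := by
  ext q
  exact (AlexandroffSquare.exists_homeomorph_apply_eq_iff (X := 𝕀) (Y := 𝕀)).trans
    exists_unitInterval_homeomorph_apply_eq_apply_eq_iff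

lemma stratum_nonempty {d v h : Prop} (hd : d → (v ↔ h)) : (stratum d v h).Nonempty := by
  obtain ⟨a, ha₀, ha₁⟩ := exists_between (zero_lt_one (α := 𝕀))
  obtain ⟨b, hab, hb₁⟩ := exists_between ha₁
  have hb₀ : 0 < b := ha₀.trans hab
  by_cases hd' : d <;> by_cases hv : v <;> by_cases hh : h
  · exact ⟨(0, 0), by simp [mem_stratum_iff, *]⟩
  · exact absurd ((hd hd').1 hv) hh
  · exact absurd ((hd hd').2 hh) hv
  · exact ⟨(a, a), by simp [mem_stratum_iff, ha₀.ne', ha₁.ne, *]⟩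
  · exact ⟨(0, 1), by simp [mem_stratum_iff, *]⟩
  · exact ⟨(0, a), by simp [mem_stratum_iff, ha₀.ne, ha₀.ne', ha₁.ne, *]⟩
  · exact ⟨(a, 0), by simp [mem_stratum_iff, ha₀.ne', ha₁.ne, *]⟩
  · exact ⟨(a, b), by simp [mem_stratum_iff, ha₀.ne', ha₁.ne, hab.ne, hb₀.ne', hb₁.ne, *]⟩

lemma setOf_alexOrbit_eq :
    {S | ∃ p : 𝕀 × 𝕀, S = alexOrbit p} =
      {S | ∃ d v h : Prop, (d → (v ↔ h)) ∧ S = stratum d v h} := by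
  ext S
  constructor
  · rintro ⟨p, rfl⟩
    exact ⟨_, _, _, fun hd ↦ by rw [hd], alexOrbit_eq_stratum p⟩
  · rintro ⟨d, v, h, hd, rfl⟩
    obtain ⟨p, hp₁, hp₂, hp₃⟩ := stratum_nonempty hd
    exact ⟨p, by rw [alexOrbit_eq_stratum, hp₁, hp₂, hp₃]⟩

lemma mem_Ioo_zero_one_iff {t : 𝕀} : t ∈ Ioo (0 : 𝕀) 1 ↔ t ≠ 0 ∧ t ≠ 1 :=
  and_congr unitInterval.pos_iff_ne_zero unitInterval.lt_one_iff_ne_one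

lemma diagonal_corners_eq : ({P₁, P₃} : Set (𝕀 × 𝕀)) = stratum True True True := by
  ext ⟨x, y⟩
  simp only [mem_stratum_iff, mem_insert_iff, mem_singleton_iff, P₁, P₃, Prod.mk.injEq]
  grind

lemma offDiagonal_corners_eq : ({P₂, P₄} : Set (𝕀 × 𝕀)) = stratum False True True := by
  ext ⟨x, y⟩
  simp only [mem_stratum_iff, mem_insert_iff, mem_singleton_iff, P₂, P₄, Prod.mk.injEq]
  grind [zero_ne_one (α := 𝕀)]

lemma vertical_edges_eq : L₁ ∪ L₃ = stratum False True False := by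
  ext ⟨x, y⟩
  simp only [mem_stratum_iff, mem_union, L₁, L₃, mem_prod, mem_singleton_iff, mem_Ioo_zero_one_iff]
  grind

lemma horizontal_edges_eq : L₂ ∪ L₄ = stratum False False True := by
  ext ⟨x, y⟩
  simp only [mem_stratum_iff, mem_union, L₂, L₄, mem_prod, mem_singleton_iff, mem_Ioo_zero_one_iff]
  grind

lemma diagonal_interior_eq : diag \ {P₁, P₃} = stratum True False False := by
  ext ⟨x, y⟩
  simp only [mem_stratum_iff, mem_sdiff, diag, mem_ofPred_eq, mem_insert_iff, mem_singleton_iff, P₁,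
    P₃, Prod.mk.injEq]
  grind

lemma offDiagonal_interior_eq :
    (Ioo (0 : 𝕀) 1 ×ˢ Ioo (0 : 𝕀) 1) \ diag = stratum False False False := by
  ext ⟨x, y⟩
  simp only [mem_stratum_iff, mem_sdiff, diag, mem_ofPred_eq, mem_prod, mem_Ioo_zero_one_iff]
  grind

end Orbits

/-- The orbits of the full homeomorphism group of the Alexandroff square are exactly
`{P₁,P₃}`, `{P₂,P₄}`, `L₁ ∪ L₃`, `L₂ ∪ L₄`, `Δ \ {P₁,P₃}` and
`((0,1)×(0,1)) \ Δ`. -/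
theorem alexandroff_orbit_space :
    {S | ∃ x : 𝕀 × 𝕀, S = alexOrbit x} =
      ({{P₁, P₃}, {P₂, P₄}, L₁ ∪ L₃, L₂ ∪ L₄, diag \ {P₁, P₃},
        ((Ioo (0 : 𝕀) 1) ×ˢ (Ioo (0 : 𝕀) 1)) \ diag} : Set (Set (𝕀 × 𝕀))) := by
  rw [setOf_alexOrbit_eq, diagonal_interior_eq, diagonal_corners_eq, offDiagonal_corners_eq,
    vertical_edges_eq, horizontal_edges_eq, offDiagonal_interior_eq]
  ext S
  simp only [mem_ofPred_eq, mem_insert_iff, mem_singleton_iff, Prop.exists_iff]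
  tauto
end

section
/- Let 𝒢_𝕆 denote the group of all homeomorphisms of the lexicographically ordered square 𝕆 acting on 𝕆 by evaluation. The set of orbits {𝒢_𝕆·x : x ∈ 𝕆} equals the five-element family { {P₁,P₃}, {P₂,P₄}, L₁ ∪ L₃, L₂ ∪ L₄, (0,1)×(0,1) }. -/
open Set

/-- The unit interval `[0,1]`. -/
local notation "𝕀" => unitInterval

/-- The strict lexicographic order on `[0,1] × [0,1]`:
`(x,y) < (s,t)` iff `x < s`, or `x = s` and `y < t`. -/
def lexLT (p q : 𝕀 × 𝕀) : Prop := p.1 < q.1 ∨ (p.1 = q.1 ∧ p.2 < q.2)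

/-- The order topology of the lexicographic order on `[0,1] × [0,1]`, generated by the
open rays. -/
def lexTop : TopologicalSpace (𝕀 × 𝕀) :=
  TopologicalSpace.generateFrom
    ({S | ∃ a, S = {x | lexLT a x}} ∪ {S | ∃ a, S = {x | lexLT x a}})

/-- The orbit of a point of the lexicographically ordered square under the full group of
self-homeomorphisms. -/
def lexOrbit (x : 𝕀 × 𝕀) : Set (𝕀 × 𝕀) :=
  {y | ∃ g : @Homeomorph (𝕀 × 𝕀) (𝕀 × 𝕀) lexTop lexTop, g x = y}

/-!
The lexicographic square is a complete dense linear order, so by the intermediate value theorem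
every homeomorphism is monotone or antitone; up to the reflection `(a, b) ↦ (1 - a, 1 - b)` it is
an order automorphism. An order automorphism permutes the columns `{a} × [0,1]`: the interval
between two points of one column embeds in the separable space `[0,1]`, whereas an interval
meeting two columns contains uncountably many disjoint open intervals, one for each column in
between. Hence it acts on the first coordinate, and on the second coordinate of each column,
through order automorphisms of `[0,1]`. The orbits of the latter are `{0}`, `{1}` and `(0,1)`, so
the orbits of the order automorphisms are the nine products of these, and the reflection
identifies them in pairs, fixing only `(0,1) × (0,1)`.
-/

open MulAction Function unitInterval

section LexicographicSupremum

variable {α β : Type*}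

/-- The supremum of a set in a lexicographic product of complete lattices: the supremum of the
first coordinates, then the supremum of the part of the set lying over it. -/
def lexSup [CompleteLattice α] [CompleteLattice β] (s : Set (α ×ₗ β)) : α ×ₗ β :=
  toLex (⨆ p ∈ s, (ofLex p).1, sSup {b | toLex (⨆ p ∈ s, (ofLex p).1, b) ∈ s})

theorem isLUB_lexSup [CompleteLattice α] [CompleteLattice β] (s : Set (α ×ₗ β)) :
    IsLUB s (lexSup s) := by
  refine ⟨fun p hp => Prod.Lex.le_iff'.2 ⟨le_biSup (fun p => (ofLex p).1) hp, fun hfst => ?_⟩,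
    fun u hu => Prod.Lex.le_iff'.2
      ⟨iSup₂_le fun p hp => (Prod.Lex.le_iff'.1 (hu hp)).1, fun hfst => sSup_le fun b hb => ?_⟩⟩
  · exact le_sSup (show toLex (⨆ p ∈ s, (ofLex p).1, (ofLex p).2) ∈ s by
      rwa [show ⨆ p ∈ s, (ofLex p).1 = (ofLex p).1 from hfst.symm])
  · exact (Prod.Lex.le_iff'.1 (hu hb)).2 hfst

noncomputable instance [CompleteLinearOrder α] [CompleteLinearOrder β] :
    CompleteLinearOrder (α ×ₗ β) where
  __ := Prod.Lex.instLinearOrder α β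
  __ := (Prod.Lex.boundedOrder : BoundedOrder (α ×ₗ β))
  __ := LinearOrder.toBiheytingAlgebra (α ×ₗ β)
  sSup := lexSup
  sInf s := lexSup (lowerBounds s)
  isLUB_sSup := isLUB_lexSup
  isGLB_sInf s := isLUB_lowerBounds.1 (isLUB_lexSup (lowerBounds s))

end LexicographicSupremum

section OrderTopology

variable {α : Type*} [TopologicalSpace α]

/-- An antitone involution of a densely ordered space is a homeomorphism. -/
def antitoneInvolutionHomeomorph [LinearOrder α] [DenselyOrdered α] [OrderTopology α] {r : α → α}
    (hr : Antitone r) (hinv : Involutive r) : α ≃ₜ α where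
  toEquiv := hinv.toPerm
  continuous_toFun := hr.dual_right.continuous_of_surjective hinv.surjective
  continuous_invFun := hr.dual_right.continuous_of_surjective hinv.surjective

theorem exists_homeomorph_apply_eq_iff [ConditionallyCompleteLinearOrder α] [BoundedOrder α]
    [DenselyOrdered α] [OrderTopology α] {r : α → α} (hr : StrictAnti r) (hinv : Involutive r)
    {x y : α} :
    (∃ g : α ≃ₜ α, g x = y) ↔ y ∈ orbit (α ≃o α) x ∪ orbit (α ≃o α) (r x) := by
  constructor
  · rintro ⟨g, rfl⟩
    rcases g.continuous.strictMono_of_inj_boundedOrder' g.injective with hg | hg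
    · exact .inl ⟨hg.orderIsoOfSurjective g g.surjective, rfl⟩
    · have hsurj : Surjective (g ∘ r) := g.surjective.comp hinv.surjective
      exact .inr ⟨(hg.comp hr).orderIsoOfSurjective _ hsurj, congrArg g (hinv x)⟩
  · rintro (⟨e, rfl⟩ | ⟨e, rfl⟩)
    · exact ⟨e.toHomeomorph, rfl⟩
    · exact ⟨(antitoneInvolutionHomeomorph hr.antitone hinv).trans e.toHomeomorph, rfl⟩

end OrderTopology

section Columns

variable {α β γ δ : Type*}

theorem countable_of_strictMonoOn_columns [LinearOrder α] [LinearOrder β] [Nontrivial β]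
    [LinearOrder γ] [DenselyOrdered γ] [TopologicalSpace γ] [OrderClosedTopology γ]
    [TopologicalSpace.SeparableSpace γ] {f : α ×ₗ β → γ} {s : Set α}
    (hf : StrictMonoOn f {p | (ofLex p).1 ∈ s}) : s.Countable := by
  obtain ⟨b₀, b₁, hb⟩ := exists_pair_lt β
  let U (a : α) : Set γ := Ioo (f (toLex (a, b₀))) (f (toLex (a, b₁)))
  have hU_lt {a a' : α} (ha : a ∈ s) (ha' : a' ∈ s) (hlt : a < a') : Disjoint (U a) (U a') := by
    have hgap : f (toLex (a, b₁)) < f (toLex (a', b₀)) :=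
      hf ha ha' (Prod.Lex.toLex_lt_toLex.2 (.inl hlt))
    exact disjoint_left.2 fun c hc hc' => (hc.2.trans hgap).not_gt hc'.1
  have hU_disj : s.PairwiseDisjoint U := fun a ha a' ha' hne =>
    hne.lt_or_gt.elim (hU_lt ha ha') fun hlt => (hU_lt ha' ha hlt).symm
  exact hU_disj.countable_of_isOpen (fun _ _ => isOpen_Ioo) fun a ha =>
    nonempty_Ioo.2 (hf ha ha (Prod.Lex.toLex_lt_toLex.2 (.inr ⟨rfl, hb⟩)))

theorem fst_eq_of_mem_Icc [PartialOrder α] [Preorder β] {p q r : α ×ₗ β}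
    (hpq : (ofLex p).1 = (ofLex q).1) (hr : r ∈ Icc p q) : (ofLex r).1 = (ofLex p).1 :=
  le_antisymm ((Prod.Lex.monotone_fst_ofLex hr.2).trans_eq hpq.symm)
    (Prod.Lex.monotone_fst_ofLex hr.1)

theorem strictAnti_lex_map [Preorder α] [Preorder β] [Preorder γ] [Preorder δ] {f : α → γ}
    {g : β → δ} (hf : StrictAnti f) (hg : StrictAnti g) :
    StrictAnti fun p : α ×ₗ β => (toLex (f (ofLex p).1, g (ofLex p).2) : γ ×ₗ δ) := by
  intro p q hpq
  rw [Prod.Lex.lt_iff] at hpq ⊢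
  exact hpq.imp (fun hfst => hf hfst) fun h => ⟨congrArg f h.1.symm, hg h.2⟩

variable [LinearOrder α] [LinearOrder β] [LinearOrder γ] [LinearOrder δ]

theorem fst_apply_eq_of_fst_eq [DenselyOrdered β] [TopologicalSpace β] [OrderClosedTopology β]
    [TopologicalSpace.SeparableSpace β] [Nontrivial δ]
    (hγ : ∀ c c' : γ, c < c' → ¬(Ioo c c').Countable) (e : α ×ₗ β ≃o γ ×ₗ δ) {p q : α ×ₗ β}
    (hpq : (ofLex p).1 = (ofLex q).1) : (ofLex (e p)).1 = (ofLex (e q)).1 := by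
  wlog hle : p ≤ q generalizing p q
  · exact (this hpq.symm (le_of_not_ge hle)).symm
  by_contra hne
  have hlt : (ofLex (e p)).1 < (ofLex (e q)).1 :=
    (Prod.Lex.monotone_fst_ofLex (e.monotone hle)).lt_of_ne hne
  have hcolumn (r : γ ×ₗ δ) (hr : (ofLex r).1 ∈ Ioo (ofLex (e p)).1 (ofLex (e q)).1) :
      (ofLex (e.symm r)).1 = (ofLex p).1 :=
    fst_eq_of_mem_Icc hpq ⟨e.le_symm_apply.2 (Prod.Lex.le_iff.2 (.inl hr.1)),
      e.symm_apply_le.2 (Prod.Lex.le_iff.2 (.inl hr.2))⟩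
  refine hγ _ _ hlt (countable_of_strictMonoOn_columns (f := fun r => (ofLex (e.symm r)).2) ?_)
  exact fun r hr r' hr' hlt' =>
    (Prod.Lex.lt_iff'.1 (e.symm.strictMono hlt')).2 ((hcolumn r hr).trans (hcolumn r' hr').symm)

/-- An isomorphism of lexicographic products preserves columns if it maps each column
`{a} × β` of its domain onto a column of its codomain. -/
def PreservesColumns (e : α ×ₗ β ≃o γ ×ₗ δ) : Prop :=
  ∀ p q, (ofLex (e p)).1 = (ofLex (e q)).1 ↔ (ofLex p).1 = (ofLex q).1

theorem preservesColumns_of_not_countable_Ioo [DenselyOrdered β] [Nontrivial β]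
    [TopologicalSpace β] [OrderClosedTopology β] [TopologicalSpace.SeparableSpace β]
    (hα : ∀ a a' : α, a < a' → ¬(Ioo a a').Countable) (e : α ×ₗ β ≃o α ×ₗ β) :
    PreservesColumns e := fun _ _ =>
  ⟨fun h => by simpa using fst_apply_eq_of_fst_eq hα e.symm h, fst_apply_eq_of_fst_eq hα e⟩

namespace PreservesColumns

variable {e : α ×ₗ β ≃o γ ×ₗ δ}

theorem exists_fst_orderIso (he : PreservesColumns e) (p : α ×ₗ β) :
    ∃ u : α ≃o γ, u (ofLex p).1 = (ofLex (e p)).1 := by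
  let u (a : α) : γ := (ofLex (e (toLex (a, (ofLex p).2)))).1
  have hu_mono : StrictMono u := fun a a' haa' =>
    (Prod.Lex.monotone_fst_ofLex (e.monotone (Prod.Lex.toLex_le_toLex.2 (.inl haa')))).lt_of_ne
      fun h => haa'.ne ((he _ _).1 h)
  have hu_surj : Surjective u := fun c => by
    let r : α ×ₗ β := e.symm (toLex (c, (ofLex (e p)).2))
    refine ⟨(ofLex r).1, ?_⟩
    calc u (ofLex r).1 = (ofLex (e r)).1 := (he _ _).2 rfl
      _ = c := by simp [r]
  exact ⟨hu_mono.orderIsoOfSurjective u hu_surj, rfl⟩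

theorem exists_snd_orderIso (he : PreservesColumns e) (p : α ×ₗ β) :
    ∃ v : β ≃o δ, v (ofLex p).2 = (ofLex (e p)).2 := by
  let v (b : β) : δ := (ofLex (e (toLex ((ofLex p).1, b)))).2
  have hv_mono : StrictMono v := fun b b' hbb' =>
    have hlt : e (toLex ((ofLex p).1, b)) < e (toLex ((ofLex p).1, b')) :=
      e.strictMono (Prod.Lex.toLex_lt_toLex.2 (.inr ⟨rfl, hbb'⟩))
    (Prod.Lex.lt_iff'.1 hlt).2 ((he _ _).2 rfl)
  have hv_surj : Surjective v := fun d => by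
    let r : α ×ₗ β := e.symm (toLex ((ofLex (e p)).1, d))
    have hr : (ofLex r).1 = (ofLex p).1 := (he r p).1 (by simp [r])
    refine ⟨(ofLex r).2, ?_⟩
    calc v (ofLex r).2 = (ofLex (e r)).2 := by rw [← toLex_ofLex r]; simp [v, ← hr]
      _ = d := by simp [r]
  exact ⟨hv_mono.orderIsoOfSurjective v hv_surj, rfl⟩

end PreservesColumns

theorem mem_orbit_lex_iff [DenselyOrdered β] [Nontrivial β] [TopologicalSpace β]
    [OrderClosedTopology β] [TopologicalSpace.SeparableSpace β]
    (hα : ∀ a a' : α, a < a' → ¬(Ioo a a').Countable) {p q : α ×ₗ β} :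
    q ∈ orbit (α ×ₗ β ≃o α ×ₗ β) p ↔
      ofLex q ∈ orbit (α ≃o α) (ofLex p).1 ×ˢ orbit (β ≃o β) (ofLex p).2 := by
  constructor
  · rintro ⟨e, rfl⟩
    have he := preservesColumns_of_not_countable_Ioo hα e
    exact ⟨he.exists_fst_orderIso p, he.exists_snd_orderIso p⟩
  · rintro ⟨⟨u, hu⟩, ⟨v, hv⟩⟩
    exact ⟨Prod.Lex.prodLexCongr u v, congrArg toLex (Prod.ext hu hv)⟩

end Columns

section UnitInterval

theorem orbit_orderIso_bot {α : Type*} [PartialOrder α] [OrderBot α] :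
    orbit (α ≃o α) (⊥ : α) = {⊥} :=
  eq_singleton_iff_unique_mem.2 ⟨mem_orbit_self _, by rintro _ ⟨e, rfl⟩; exact e.map_bot⟩

theorem orbit_orderIso_top {α : Type*} [PartialOrder α] [OrderTop α] :
    orbit (α ≃o α) (⊤ : α) = {⊤} :=
  eq_singleton_iff_unique_mem.2 ⟨mem_orbit_self _, by rintro _ ⟨e, rfl⟩; exact e.map_top⟩

theorem orbit_unitInterval_zero : orbit (𝕀 ≃o 𝕀) (0 : 𝕀) = {0} := orbit_orderIso_bot

theorem orbit_unitInterval_one : orbit (𝕀 ≃o 𝕀) (1 : 𝕀) = {1} := orbit_orderIso_top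

theorem unitInterval_not_countable_Ioo (a b : 𝕀) (hab : a < b) : ¬(Ioo a b).Countable := fun h =>
  have himage : Ioo (a : ℝ) b ⊆ Subtype.val '' Ioo a b := fun x hx =>
    ⟨⟨x, a.2.1.trans hx.1.le, hx.2.le.trans b.2.2⟩, hx, rfl⟩
  hab.not_ge (Cardinal.Real.Ioo_countable_iff.1 ((h.image _).mono himage))

/-- The automorphism `t ↦ t ^ c` of the ordered unit interval. -/
noncomputable def unitIntervalRpow (c : ℝ) (hc : 0 < c) : 𝕀 ≃o 𝕀 :=
  StrictMono.orderIsoOfRightInverse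
    (fun t => ⟨(t : ℝ) ^ c, Real.rpow_nonneg t.2.1 _, Real.rpow_le_one t.2.1 t.2.2 hc.le⟩)
    (fun t _ htu => Real.rpow_lt_rpow t.2.1 htu hc)
    (fun t => ⟨(t : ℝ) ^ c⁻¹, Real.rpow_nonneg t.2.1 _,
      Real.rpow_le_one t.2.1 t.2.2 (inv_pos.2 hc).le⟩)
    (fun t => Subtype.ext (Real.rpow_inv_rpow t.2.1 hc.ne'))

theorem orbit_unitInterval_of_mem_Ioo {a : 𝕀} (ha : a ∈ Ioo (0 : 𝕀) 1) :
    orbit (𝕀 ≃o 𝕀) a = Ioo 0 1 := by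
  ext b
  constructor
  · rintro ⟨e, rfl⟩
    have he₀ : e 0 = 0 := e.map_bot
    have he₁ : e 1 = 1 := e.map_top
    exact ⟨he₀.symm.trans_lt (e.strictMono ha.1), (e.strictMono ha.2).trans_eq he₁⟩
  · intro hb
    have hc : 0 < Real.logb a b := Real.logb_pos_of_base_lt_one ha.1 ha.2 hb.1 hb.2
    exact ⟨unitIntervalRpow _ hc, Subtype.ext
      (Real.rpow_logb ha.1 (Subtype.coe_ne_coe.2 ha.2.ne) hb.1)⟩

theorem unitInterval_endpoint_or_mem_Ioo (a : 𝕀) : (a = 0 ∨ a = 1) ∨ a ∈ Ioo (0 : 𝕀) 1 := by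
  rw [mem_Ioo, unitInterval.pos_iff_ne_zero, unitInterval.lt_one_iff_ne_one]
  tauto

theorem unitInterval_symm_mem_Ioo {a : 𝕀} (ha : a ∈ Ioo (0 : 𝕀) 1) : σ a ∈ Ioo (0 : 𝕀) 1 :=
  ⟨symm_one ▸ symm_lt_symm.2 ha.2, symm_zero ▸ symm_lt_symm.2 ha.1⟩

end UnitInterval

section LexicographicSquare

/-- The order topology of the lexicographic order. -/
local instance : TopologicalSpace (𝕀 ×ₗ 𝕀) := Preorder.topology _

local instance : OrderTopology (𝕀 ×ₗ 𝕀) := ⟨rfl⟩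

theorem lexLT_iff_toLex_lt (p q : 𝕀 × 𝕀) : lexLT p q ↔ toLex p < toLex q :=
  Prod.Lex.toLex_lt_toLex.symm

theorem lexTop_eq_induced : lexTop = .induced toLex (Preorder.topology (𝕀 ×ₗ 𝕀)) := by
  refine .trans (congrArg _ ?_) induced_generateFrom_eq.symm
  ext S
  simp only [lexLT_iff_toLex_lt]
  constructor
  · rintro (⟨a, rfl⟩ | ⟨a, rfl⟩)
    · exact ⟨Ioi (toLex a), ⟨toLex a, .inl rfl⟩, rfl⟩
    · exact ⟨Iio (toLex a), ⟨toLex a, .inr rfl⟩, rfl⟩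
  · rintro ⟨_, ⟨a, rfl | rfl⟩, rfl⟩
    · exact .inl ⟨ofLex a, rfl⟩
    · exact .inr ⟨ofLex a, rfl⟩

/-- The map `toLex`, identifying the square topologized by `lexTop` with the linear order
`𝕀 ×ₗ 𝕀` in its order topology. -/
def toLexHomeomorph : @Homeomorph (𝕀 × 𝕀) (𝕀 ×ₗ 𝕀) lexTop _ :=
  letI := lexTop
  toLex.toHomeomorphOfIsInducing ⟨lexTop_eq_induced⟩

theorem mem_lexOrbit_iff {x y : 𝕀 × 𝕀} :
    y ∈ lexOrbit x ↔ ∃ g : 𝕀 ×ₗ 𝕀 ≃ₜ 𝕀 ×ₗ 𝕀, g (toLex x) = toLex y := by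
  let := lexTop
  constructor
  · rintro ⟨g, rfl⟩
    exact ⟨(toLexHomeomorph.symm.trans g).trans toLexHomeomorph, rfl⟩
  · rintro ⟨g, hg⟩
    exact ⟨(toLexHomeomorph.trans g).trans toLexHomeomorph.symm, congrArg ofLex hg⟩

/-- The point reflection `(a, b) ↦ (1 - a, 1 - b)` of the lexicographically ordered square. -/
def lexReflection (p : 𝕀 ×ₗ 𝕀) : 𝕀 ×ₗ 𝕀 := toLex (σ (ofLex p).1, σ (ofLex p).2)

theorem lexReflection_involutive : Involutive lexReflection := fun p => by
  simp [lexReflection]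

theorem lexReflection_strictAnti : StrictAnti lexReflection :=
  strictAnti_lex_map strictAnti_symm strictAnti_symm

theorem lexOrbit_eq (a b : 𝕀) :
    lexOrbit (a, b) = orbit (𝕀 ≃o 𝕀) a ×ˢ orbit (𝕀 ≃o 𝕀) b ∪
      orbit (𝕀 ≃o 𝕀) (σ a) ×ˢ orbit (𝕀 ≃o 𝕀) (σ b) := by
  ext y
  rw [mem_lexOrbit_iff, exists_homeomorph_apply_eq_iff
    lexReflection_strictAnti lexReflection_involutive]
  exact or_congr (mem_orbit_lex_iff unitInterval_not_countable_Ioo)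
    (mem_orbit_lex_iff unitInterval_not_countable_Ioo)

theorem lexOrbit_endpoint_self {a : 𝕀} (ha : a = 0 ∨ a = 1) : lexOrbit (a, a) = {P₁, P₃} := by
  rcases ha with rfl | rfl <;>
    simp [lexOrbit_eq, orbit_unitInterval_zero, orbit_unitInterval_one, P₁, P₃, pair_comm]

theorem lexOrbit_endpoint_symm {a : 𝕀} (ha : a = 0 ∨ a = 1) :
    lexOrbit (a, σ a) = {P₂, P₄} := by
  rcases ha with rfl | rfl <;>
    simp [lexOrbit_eq, orbit_unitInterval_zero, orbit_unitInterval_one, P₂, P₄, pair_comm]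

theorem lexOrbit_endpoint_Ioo {a b : 𝕀} (ha : a = 0 ∨ a = 1) (hb : b ∈ Ioo (0 : 𝕀) 1) :
    lexOrbit (a, b) = L₁ ∪ L₃ := by
  rcases ha with rfl | rfl <;>
    simp [lexOrbit_eq, orbit_unitInterval_zero, orbit_unitInterval_one,
      orbit_unitInterval_of_mem_Ioo, hb, unitInterval_symm_mem_Ioo hb, L₁, L₃, union_comm]

theorem lexOrbit_Ioo_endpoint {a b : 𝕀} (ha : a ∈ Ioo (0 : 𝕀) 1) (hb : b = 0 ∨ b = 1) :
    lexOrbit (a, b) = L₂ ∪ L₄ := by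
  rcases hb with rfl | rfl <;>
    simp [lexOrbit_eq, orbit_unitInterval_zero, orbit_unitInterval_one,
      orbit_unitInterval_of_mem_Ioo, ha, unitInterval_symm_mem_Ioo ha, L₂, L₄, union_comm]

theorem lexOrbit_Ioo_Ioo {a b : 𝕀} (ha : a ∈ Ioo (0 : 𝕀) 1) (hb : b ∈ Ioo (0 : 𝕀) 1) :
    lexOrbit (a, b) = Ioo (0 : 𝕀) 1 ×ˢ Ioo (0 : 𝕀) 1 := by
  simp only [lexOrbit_eq, orbit_unitInterval_of_mem_Ioo, ha, hb, unitInterval_symm_mem_Ioo,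
    union_self]

end LexicographicSquare

/-- The orbits of the full homeomorphism group of the lexicographically ordered square
are exactly `{P₁,P₃}`, `{P₂,P₄}`, `L₁ ∪ L₃`, `L₂ ∪ L₄` and `(0,1)×(0,1)`. -/
theorem lex_square_orbit_space :
    {S | ∃ x : 𝕀 × 𝕀, S = lexOrbit x} =
      ({{P₁, P₃}, {P₂, P₄}, L₁ ∪ L₃, L₂ ∪ L₄,
        (Ioo (0 : 𝕀) 1) ×ˢ (Ioo (0 : 𝕀) 1)} : Set (Set (𝕀 × 𝕀))) := by
  obtain ⟨m, hm⟩ : (Ioo (0 : 𝕀) 1).Nonempty := nonempty_Ioo.2 zero_lt_one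
  refine subset_antisymm ?_ ?_
  · rintro _ ⟨⟨a, b⟩, rfl⟩
    rcases unitInterval_endpoint_or_mem_Ioo a with ha | ha <;>
      rcases unitInterval_endpoint_or_mem_Ioo b with hb | hb
    · have hba : b = a ∨ b = σ a := by
        rcases ha with rfl | rfl <;> simpa [or_comm] using hb
      rcases hba with rfl | rfl
      · exact .inl (lexOrbit_endpoint_self ha)
      · exact .inr (.inl (lexOrbit_endpoint_symm ha))
    · exact .inr (.inr (.inl (lexOrbit_endpoint_Ioo ha hb)))
    · exact .inr (.inr (.inr (.inl (lexOrbit_Ioo_endpoint ha hb))))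
    · exact .inr (.inr (.inr (.inr (lexOrbit_Ioo_Ioo ha hb))))
  · rintro _ (rfl | rfl | rfl | rfl | rfl)
    · exact ⟨(0, 0), (lexOrbit_endpoint_self (.inl rfl)).symm⟩
    · exact ⟨(0, σ 0), (lexOrbit_endpoint_symm (.inl rfl)).symm⟩
    · exact ⟨(0, m), (lexOrbit_endpoint_Ioo (.inl rfl) hm).symm⟩
    · exact ⟨(m, 0), (lexOrbit_Ioo_endpoint hm (.inl rfl)).symm⟩
    · exact ⟨(m, m), (lexOrbit_Ioo_Ioo hm hm).symm⟩
end
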